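/- arXiv:2504.10865 — 2 statements merged into one kernel-verified Lean document; each statement's English description precedes it below -/
import Mathlib

section
/- Let h : ℝ^p → ℝ^p be continuous with h(x) = A_x x + b_x, where A_x ∈ ℝ^{p×p} and b_x ∈ ℝ^p depend on x. Suppose sup_x max_i (A_x[i,i] + Σ_{j≠i} |A_x[i,j]|) < 0, sup_x ‖A_x‖_∞ < ∞, and sup_x ‖b_x‖_∞ < ∞. Then there exists x* ∈ ℝ^p with h(x*) = 0. -/
open Matrix Finset
attribute [local instance] Matrix.linftyOpNormedAddCommGroup

namespace CubicalSperner

variable {ι : Type*} [DecidableEq ι]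

/-- The lattice point `x + ∑_{i ∈ S} e_i`. -/
def shift (S : Finset ι) (x : ι → ℕ) : ι → ℕ := fun i => if i ∈ S then x i + 1 else x i

/-- The cubical cup product `ds_{i_m} ∪ ⋯ ∪ ds_{i_1}` modulo two, for a list of labels
`[i_1, …, i_m]`, evaluated on the unit cube with least vertex `x` and directions `S`. -/
def cup (s : ι → (ι → ℕ) → ZMod 2) : List ι → Finset ι → (ι → ℕ) → ZMod 2
  | [], _, _ => 1
  | i :: l, S, x => ∑ k ∈ S, cup s l (S.erase k) x * (s i (shift S x) + s i (shift (S.erase k) x))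

/-- Lattice points with coordinates in `[0, N)` in the directions `S`, and equal to `N` in the
other directions. -/
def box [Fintype ι] (N : ℕ) (S : Finset ι) : Finset (ι → ℕ) :=
  Fintype.piFinset fun i => if i ∈ S then Finset.range N else {N}

theorem shift_erase_shift_singleton {S : Finset ι} {i : ι} (hi : i ∈ S) (x : ι → ℕ) :
    shift (S.erase i) (shift {i} x) = shift S x := by
  ext j
  by_cases hj : j = i
  · subst hj; simp [shift, hi]
  · simp [shift, hj]

theorem sum_erase_comm {M : Type*} [AddCommMonoid M] (S : Finset ι) (F : ι → ι → M) :
    ∑ i ∈ S, ∑ k ∈ S.erase i, F i k = ∑ k ∈ S, ∑ i ∈ S.erase k, F i k := by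
  apply Finset.sum_comm'
  intro x y
  simp only [Finset.mem_erase]
  tauto

/-- Off-diagonal sums of symmetric functions vanish modulo two. -/
theorem sum_erase_eq_zero_of_symm (S : Finset ι) (F : ι → ι → ZMod 2)
    (hF : ∀ i k, F i k = F k i) : ∑ i ∈ S, ∑ k ∈ S.erase i, F i k = 0 := by
  rw [Finset.sum_sigma']
  refine Finset.sum_involution (fun a _ => ⟨a.2, a.1⟩) ?_ ?_ ?_ ?_
  · rintro ⟨i, k⟩ _
    simp only [hF k i]
    exact CharTwo.add_self_eq_zero _
  · rintro ⟨i, k⟩ h _ heq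
    simp only [Finset.mem_sigma, Finset.mem_erase] at h
    exact h.2.1 (congrArg Sigma.fst heq)
  · rintro ⟨i, k⟩ h
    simp only [Finset.mem_sigma, Finset.mem_erase] at h ⊢
    exact ⟨h.2.2, fun e => h.2.1 e.symm, h.1⟩
  · rintro ⟨i, k⟩ _
    rfl

/-- The cup product of coboundaries is closed. -/
theorem sum_cup_shift_singleton (s : ι → (ι → ℕ) → ZMod 2) (l : List ι) (S : Finset ι)
    (x : ι → ℕ) :
    ∑ i ∈ S, cup s l (S.erase i) (shift {i} x) = ∑ i ∈ S, cup s l (S.erase i) x := by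
  induction l generalizing S with
  | nil => simp [cup]
  | cons a l ih =>
    have hleft : ∑ i ∈ S, cup s (a :: l) (S.erase i) (shift {i} x) =
        ∑ i ∈ S, ∑ k ∈ S.erase i, cup s l ((S.erase i).erase k) x *
          (s a (shift S x) + s a (shift (S.erase i) x)) := by
      calc _ = ∑ i ∈ S, ∑ k ∈ S.erase i, cup s l ((S.erase k).erase i) (shift {i} x) *
            (s a (shift S x) + s a (shift (S.erase k) x)) := by
            refine Finset.sum_congr rfl fun i hi => Finset.sum_congr rfl fun k hk => ?_
            have hik : i ∈ S.erase k :=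
              Finset.mem_erase.2 ⟨(Finset.ne_of_mem_erase hk).symm, hi⟩
            rw [Finset.erase_right_comm, shift_erase_shift_singleton hi,
              shift_erase_shift_singleton hik]
        _ = _ := by
            rw [sum_erase_comm]
            refine Finset.sum_congr rfl fun k _ => ?_
            rw [← Finset.sum_mul, ih, Finset.sum_mul]
    rw [hleft, ← sub_eq_zero, CharTwo.sub_eq_add]
    have hsplit : ∀ i k, cup s l ((S.erase i).erase k) x *
        (s a (shift S x) + s a (shift (S.erase i) x) +
          (s a (shift (S.erase i) x) + s a (shift ((S.erase i).erase k) x))) =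
        cup s l ((S.erase i).erase k) x *
          (s a (shift S x) + s a (shift ((S.erase i).erase k) x)) := fun i k => by
      linear_combination cup s l ((S.erase i).erase k) x *
        CharTwo.add_self_eq_zero (s a (shift (S.erase i) x))
    simp only [cup, ← Finset.sum_add_distrib, ← mul_add, hsplit]
    exact sum_erase_eq_zero_of_symm S _ fun i k => by rw [Finset.erase_right_comm]

/-- The cup product `ds_a ∪ w` of a closed `w` is the coboundary of `s_a ∪ w`. -/
theorem cup_cons_eq_coboundary (s : ι → (ι → ℕ) → ZMod 2) (a : ι) (l : List ι) (S : Finset ι)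
    (x : ι → ℕ) :
    cup s (a :: l) S x =
      ∑ i ∈ S, (cup s l (S.erase i) (shift {i} x) * s a (shift (S.erase i) (shift {i} x)) +
        cup s l (S.erase i) x * s a (shift (S.erase i) x)) := by
  have h : ∀ i ∈ S, cup s l (S.erase i) (shift {i} x) * s a (shift (S.erase i) (shift {i} x)) =
      cup s l (S.erase i) (shift {i} x) * s a (shift S x) := fun i hi => by
    rw [shift_erase_shift_singleton hi]
  rw [Finset.sum_add_distrib, Finset.sum_congr rfl h, ← Finset.sum_mul, sum_cup_shift_singleton,
    Finset.sum_mul, ← Finset.sum_add_distrib]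
  simp only [cup, mul_add]

theorem cup_eq_zero_of_const (s : ι → (ι → ℕ) → ZMod 2) {l : List ι} {S : Finset ι}
    {x : ι → ℕ} {i : ι} (hi : i ∈ l) {v : ZMod 2} (hv : ∀ T ⊆ S, s i (shift T x) = v) :
    cup s l S x = 0 := by
  induction l generalizing S with
  | nil => simp at hi
  | cons a l ih =>
    refine Finset.sum_eq_zero fun k _ => ?_
    rcases List.mem_cons.1 hi with rfl | hi
    · rw [hv S subset_rfl, hv _ (Finset.erase_subset _ _), CharTwo.add_self_eq_zero, mul_zero]
    · rw [ih hi fun T hT => hv T (hT.trans (Finset.erase_subset _ _)), zero_mul]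

variable [Fintype ι]

theorem sum_box_eq (N : ℕ) {S : Finset ι} {i : ι} (hi : i ∈ S) (F : (ι → ℕ) → ZMod 2) :
    ∑ x ∈ box N S, F x =
      ∑ y ∈ box N (S.erase i), ∑ t ∈ Finset.range N, F (Function.update y i t) := by
  rw [← Finset.sum_product']
  refine Finset.sum_bij' (fun x _ => (Function.update x i N, x i))
    (fun q _ => Function.update q.1 i q.2) ?_ ?_ ?_ ?_ ?_
  · intro x hx
    simp only [box, Fintype.mem_piFinset, Finset.mem_product] at hx ⊢
    refine ⟨fun j => ?_, by simpa [hi] using hx i⟩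
    by_cases hj : j = i
    · subst hj; simp
    · simpa [hj] using hx j
  · rintro ⟨y, t⟩ hy
    simp only [box, Fintype.mem_piFinset, Finset.mem_product] at hy ⊢
    intro j
    by_cases hj : j = i
    · subst hj; simpa [hi] using hy.2
    · simpa [hj] using hy.1 j
  · intro x _
    simp
  · rintro ⟨y, t⟩ hy
    simp only [box, Fintype.mem_piFinset, Finset.mem_product] at hy
    have : y i = N := by simpa using hy.1 i
    simp [← this]
  · intro x _
    simp

theorem sum_box_coboundary (N : ℕ) {S : Finset ι} {i : ι} (hi : i ∈ S)
    (g : (ι → ℕ) → ZMod 2) :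
    ∑ x ∈ box N S, (g (shift {i} x) + g x) =
      ∑ y ∈ box N (S.erase i), (g y + g (Function.update y i 0)) := by
  rw [sum_box_eq N hi]
  refine Finset.sum_congr rfl fun y hy => ?_
  have hyi : y i = N := by
    simpa [box] using Fintype.mem_piFinset.1 hy i
  have hshift : ∀ t, shift {i} (Function.update y i t) = Function.update y i (t + 1) := by
    intro t
    ext j
    by_cases hj : j = i
    · subst hj; simp [shift]
    · simp [shift, hj]
  simp only [hshift, ← CharTwo.sub_eq_add]
  rw [Finset.sum_range_sub (fun t => g (Function.update y i t)), ← hyi, Function.update_eq_self]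

theorem sum_cup_eq_one (s : ι → (ι → ℕ) → ZMod 2) (N : ℕ)
    (hs0 : ∀ x i, (∀ j, x j ≤ N) → x i = 0 → s i x = 0)
    (hs1 : ∀ x i, (∀ j, x j ≤ N) → x i = N → s i x = 1) {l : List ι} (hl : l.Nodup) :
    ∑ x ∈ box N l.toFinset, cup s l l.toFinset x = 1 := by
  induction l with
  | nil => simp [box, cup]
  | cons a l ih =>
    obtain ⟨hal, hl⟩ := List.nodup_cons.1 hl
    set S := (a :: l).toFinset with hS
    have haS : a ∈ S := by simp [hS]
    have hSa : S.erase a = l.toFinset := by simp [hS, hal]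
    have hle : ∀ i, ∀ y ∈ box N (S.erase i), ∀ T ⊆ S.erase i, ∀ j, shift T y j ≤ N := by
      intro i y hy T hT j
      have hyj := Fintype.mem_piFinset.1 hy j
      by_cases hj : j ∈ S.erase i
      · simp only [hj, if_true, Finset.mem_range] at hyj
        simp only [shift]
        split_ifs <;> omega
      · simp only [hj, if_false, Finset.mem_singleton] at hyj
        have : j ∉ T := fun h => hj (hT h)
        simp [shift, this, hyj]
    have hle0 : ∀ i, ∀ y ∈ box N (S.erase i), ∀ T ⊆ S.erase i, ∀ j,
        shift T (Function.update y i 0) j ≤ N := by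
      intro i y hy T hT j
      refine le_trans ?_ (hle i y hy T hT j)
      by_cases hj : j = i
      · subst hj
        simp only [shift, Function.update_self]
        split_ifs <;> omega
      · simp [shift, hj]
    have hval : ∀ i, ∀ y ∈ box N (S.erase i), ∀ T ⊆ S.erase i, shift T y i = N := by
      intro i y hy T hT
      have hyi := Fintype.mem_piFinset.1 hy i
      have : i ∉ T := fun h => by simpa using hT h
      simpa [shift, this] using hyi
    have hval0 : ∀ i (y : ι → ℕ), ∀ T ⊆ S.erase i, shift T (Function.update y i 0) i = 0 := by
      intro i y T hT
      have : i ∉ T := fun h => by simpa using hT h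
      simp [shift, this]
    simp only [cup_cons_eq_coboundary]
    rw [Finset.sum_comm, Finset.sum_congr rfl fun i hi => sum_box_coboundary N hi
      (fun x => cup s l (S.erase i) x * s a (shift (S.erase i) x)),
      Finset.sum_eq_single_of_mem a haS]
    · rw [← ih hl, hSa.symm]
      refine Finset.sum_congr rfl fun y hy => ?_
      rw [hs1 _ _ (hle a y hy _ subset_rfl) (hval a y hy _ subset_rfl),
        hs0 _ _ (hle0 a y hy _ subset_rfl) (hval0 a y _ subset_rfl)]
      simp
    · intro i hi hia
      have hil : i ∈ l := by
        simp only [hS, List.mem_toFinset, List.mem_cons] at hi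
        exact hi.resolve_left hia
      refine Finset.sum_eq_zero fun y hy => ?_
      rw [cup_eq_zero_of_const s hil fun T hT => hs1 _ _ (hle i y hy T hT) (hval i y hy T hT),
        cup_eq_zero_of_const s hil fun T hT => hs0 _ _ (hle0 i y hy T hT) (hval0 i y T hT)]
      simp

/-- **Cubical Sperner lemma**: if `s i` is `0` on the face `x i = 0` and `1` on the face `x i = N`
of the grid `[0, N]^ι`, then some unit cube of the grid has, for every `i`, vertices at which `s i`
is `0` and `1` respectively. -/
theorem exists_cube (s : ι → (ι → ℕ) → ZMod 2) (N : ℕ)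
    (hs0 : ∀ x i, (∀ j, x j ≤ N) → x i = 0 → s i x = 0)
    (hs1 : ∀ x i, (∀ j, x j ≤ N) → x i = N → s i x = 1) :
    ∃ x : ι → ℕ, (∀ j, x j < N) ∧ ∀ i (v : ZMod 2), ∃ T, s i (shift T x) = v := by
  have hsum := sum_cup_eq_one s N hs0 hs1 (Finset.nodup_toList (Finset.univ : Finset ι))
  obtain ⟨x, hx, hne⟩ := Finset.exists_ne_zero_of_sum_ne_zero (hsum.trans_ne one_ne_zero)
  refine ⟨x, fun j => by simpa [box] using Fintype.mem_piFinset.1 hx j, fun i v => ?_⟩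
  by_contra! hv
  have htwo : ∀ u w : ZMod 2, u ≠ w → u = w + 1 := by decide
  exact hne (cup_eq_zero_of_const s (i := i) (by simp) fun T _ => htwo _ _ (hv T))

end CubicalSperner

open CubicalSperner Filter Topology in
/-- **Poincaré–Miranda theorem** on the cube `[-R, R]^ι`. -/
theorem exists_zero_of_miranda {ι : Type*} [Fintype ι] {R : ℝ} (hR : 0 < R)
    {f : (ι → ℝ) → ι → ℝ} (hf : Continuous f)
    (hlow : ∀ x i, (∀ j, |x j| ≤ R) → x i = -R → 0 < f x i)
    (hupp : ∀ x i, (∀ j, |x j| ≤ R) → x i = R → f x i < 0) :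
    ∃ x, f x = 0 := by
  classical
  let pt : ℕ → (ι → ℕ) → ι → ℝ := fun n x i => -R + 2 * R * (x i / (n + 1 : ℝ))
  have hpt : ∀ n x, (∀ j, x j ≤ n + 1) → ∀ j, |pt n x j| ≤ R := by
    intro n x hx j
    have h1 : (x j : ℝ) / (n + 1) ≤ 1 := by
      rw [div_le_one (by positivity)]
      exact_mod_cast hx j
    have h0 : 0 ≤ (x j : ℝ) / (n + 1) := by positivity
    rw [abs_le]
    constructor <;> simp only [pt] <;> nlinarith
  have hcube : ∀ n : ℕ, ∃ x : ι → ℕ, (∀ j, x j < n + 1) ∧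
      ∀ i, (∃ T, f (pt n (shift T x)) i < 0) ∧ ∃ T, 0 ≤ f (pt n (shift T x)) i := by
    intro n
    obtain ⟨x, hx, hxs⟩ := exists_cube
      (fun i x => if f (pt n x) i < 0 then (1 : ZMod 2) else 0) (n + 1)
      (fun x i hx hxi => if_neg (hlow _ i (hpt n x hx) (by simp [pt, hxi])).not_gt)
      (fun x i hx hxi => if_pos (hupp _ i (hpt n x hx) (by
        have : (n + 1 : ℝ) ≠ 0 := by positivity
        simp only [pt, hxi]; push_cast; field_simp; ring)))
    refine ⟨x, hx, fun i => ⟨?_, ?_⟩⟩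
    · obtain ⟨T, hT⟩ := hxs i 1
      exact ⟨T, by by_contra h; simp [h] at hT⟩
    · obtain ⟨T, hT⟩ := hxs i 0
      exact ⟨T, by by_contra h; simp [not_le.1 h] at hT⟩
  choose x hx hsign using hcube
  choose hneg hnonneg using hsign
  choose T hT using hneg
  choose U hU using hnonneg
  have hmem : ∀ n, pt n (x n) ∈ Metric.closedBall (0 : ι → ℝ) R := fun n => by
    rw [mem_closedBall_zero_iff, pi_norm_le_iff_of_nonneg hR.le]
    exact hpt n _ fun j => (hx n j).le
  obtain ⟨z, -, φ, hφ, hz⟩ := (isCompact_closedBall (0 : ι → ℝ) R).tendsto_subseq hmem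
  have hstep : Tendsto (fun n => 2 * R * (1 / ((φ n : ℝ) + 1))) atTop (𝓝 0) := by
    simpa using (tendsto_one_div_add_atTop_nhds_zero_nat.comp hφ.tendsto_atTop).const_mul (2 * R)
  have hlim : ∀ V : ℕ → Finset ι,
      Tendsto (fun n => pt (φ n) (shift (V (φ n)) (x (φ n)))) atTop (𝓝 z) := by
    intro V
    have hdiff : Tendsto (fun n => pt (φ n) (shift (V (φ n)) (x (φ n))) - pt (φ n) (x (φ n)))
        atTop (𝓝 0) := by
      refine squeeze_zero_norm (fun n => ?_) hstep
      rw [pi_norm_le_iff_of_nonneg (by positivity)]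
      intro j
      have hpos : 0 ≤ 2 * R * (1 / ((φ n : ℝ) + 1)) := by positivity
      by_cases hj : j ∈ V (φ n)
      · have : (pt (φ n) (shift (V (φ n)) (x (φ n))) - pt (φ n) (x (φ n))) j =
            2 * R * (1 / ((φ n : ℝ) + 1)) := by
          simp only [pt, shift, hj, if_true, Pi.sub_apply]; push_cast; ring
        rw [this, Real.norm_of_nonneg hpos]
      · simpa [pt, shift, hj] using hpos
    simpa using hdiff.add hz
  refine ⟨z, funext fun i => le_antisymm ?_ ?_⟩
  · exact le_of_tendsto (((continuous_apply i).comp hf).continuousAt.tendsto.comp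
      (hlim fun n => T n i)) (.of_forall fun n => (hT (φ n) i).le)
  · exact ge_of_tendsto (((continuous_apply i).comp hf).continuousAt.tendsto.comp
      (hlim fun n => U n i)) (.of_forall fun n => hU (φ n) i)

theorem abs_sum_erase_mul_le {ι : Type*} [Fintype ι] [DecidableEq ι] (a x : ι → ℝ) {R : ℝ}
    (hx : ∀ j, |x j| ≤ R) (i : ι) :
    |∑ j ∈ Finset.univ.erase i, a j * x j| ≤ (∑ j ∈ Finset.univ.erase i, |a j|) * R := by
  rw [Finset.sum_mul]
  refine (Finset.abs_sum_le_sum_abs _ _).trans (Finset.sum_le_sum fun j _ => ?_)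
  rw [abs_mul]
  exact mul_le_mul_of_nonneg_left (hx j) (abs_nonneg _)

/-- If `h x = A_x x + b_x` is continuous, the row sums
`A_x i i + ∑_{j ≠ i} |A_x i j|` are uniformly bounded above by a negative constant,
and `‖A_x‖_∞`, `‖b_x‖_∞` are uniformly bounded, then `h` has a zero. -/
theorem stmt1 {p : ℕ} (A : (Fin p → ℝ) → Matrix (Fin p) (Fin p) ℝ)
    (b : (Fin p → ℝ) → Fin p → ℝ) (h : (Fin p → ℝ) → Fin p → ℝ)
    (hdef : ∀ x, h x = A x *ᵥ x + b x) (hcont : Continuous h)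
    (c : ℝ) (hc : c < 0)
    (hS : ∀ x i, A x i i + ∑ j ∈ Finset.univ.erase i, |A x i j| ≤ c)
    (KA : ℝ) (hKA : ∀ x, ‖A x‖ ≤ KA)
    (B : ℝ) (hB : ∀ x, ‖b x‖ ≤ B) :
    ∃ x : Fin p → ℝ, h x = 0 := by
  have hB0 : 0 ≤ B := (norm_nonneg _).trans (hB 0)
  obtain ⟨R, hR, hcR⟩ : ∃ R : ℝ, 0 < R ∧ c * R + B < 0 :=
    ⟨(B + 1) / -c, div_pos (by linarith) (by linarith), by
      have : c * ((B + 1) / -c) = -(B + 1) := by field_simp [hc.ne]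
      linarith⟩
  have hrow : ∀ x i, h x i =
      A x i i * x i + ∑ j ∈ Finset.univ.erase i, A x i j * x j + b x i := fun x i => by
    rw [hdef, Pi.add_apply, Finset.add_sum_erase _ (fun j => A x i j * x j) (Finset.mem_univ i)]
    rfl
  have hb : ∀ x i, |b x i| ≤ B := fun x i => (norm_le_pi_norm (b x) i).trans (hB x)
  have hSR : ∀ x i, A x i i * R + (∑ j ∈ Finset.univ.erase i, |A x i j|) * R ≤ c * R :=
    fun x i => by
      rw [← add_mul]
      exact mul_le_mul_of_nonneg_right (hS x i) hR.le
  refine exists_zero_of_miranda hR hcont (fun x i hx hxi => ?_) fun x i hx hxi => ?_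
  all_goals
    have hsum := abs_le.1 (abs_sum_erase_mul_le (A x i) x hx i)
    have hbi := abs_le.1 (hb x i)
    have hSi := hSR x i
    rw [hrow, hxi]
    linarith
end

section
/- Let G : ℝ^p → ℝ^p be continuous and suppose there exists c* < 1 such that for all x, G(x) = M_x x + v_x with ‖M_x‖_∞ ≤ c* and ‖v_x‖_∞ ≤ B < ∞. Then G has a fixed point, i.e., there exists x* with G(x*) = x*. -/
open Matrix
attribute [local instance] Matrix.linftyOpNormedAddCommGroup

open Polynomial in
/-- Evaluation at `1` of polynomials of bounded degree is a linear combination of evaluations at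
arbitrarily small positive points. -/
theorem exists_eval_one_eq_sum_eval_small (n : ℕ) {ε : ℝ} (hε : 0 < ε) :
    ∃ w t : ℕ → ℝ, (∀ i, 0 < t i ∧ t i < ε) ∧ ∀ q : ℝ[X], q.natDegree ≤ n →
      q.eval 1 = ∑ i ∈ Finset.range (n + 1), w i * q.eval (t i) := by
  set t : ℕ → ℝ := fun i ↦ ε / (i + 2) with ht
  refine ⟨fun i ↦ (Lagrange.basis (Finset.range (n + 1)) t i).eval 1, t,
    fun i ↦ ⟨by positivity, ?_⟩, fun q hq ↦ ?_⟩
  · exact div_lt_self hε (by linarith [(Nat.cast_nonneg i : (0 : ℝ) ≤ i)])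
  · have hinj : Set.InjOn t (Finset.range (n + 1)) := by
      intro i _ j _ hij
      simp only [ht] at hij
      field_simp at hij
      exact_mod_cast (by linarith : (i : ℝ) = j)
    have hdeg : q.degree < (Finset.range (n + 1)).card := by
      rw [Finset.card_range]
      exact (degree_le_of_natDegree_le hq).trans_lt (by exact_mod_cast Nat.lt_succ_self n)
    conv_lhs => rw [Lagrange.eq_interpolate hinj hdeg]
    simp [Lagrange.interpolate_apply, eval_finsetSum, mul_comm]

open Polynomial in
/-- The determinant of `1 + t • A` is a polynomial in `t` of degree at most the dimension. -/
theorem LinearMap.exists_polynomial_eval_eq_det_one_add_smul {E : Type*} [AddCommGroup E]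
    [Module ℝ E] [FiniteDimensional ℝ E] (A : E →ₗ[ℝ] E) :
    ∃ q : ℝ[X], q.natDegree ≤ Module.finrank ℝ E ∧
      ∀ t : ℝ, q.eval t = LinearMap.det (1 + t • A) := by
  set b := Module.finBasis ℝ E
  set a := LinearMap.toMatrix b b A with ha
  refine ⟨_, (natDegree_det_X_add_C_le a 1).trans_eq (Fintype.card_fin _), fun t ↦ ?_⟩
  rw [← LinearMap.det_toMatrix b, map_add, map_smul, LinearMap.toMatrix_one, ← ha,
    ← coe_evalRingHom, RingHom.map_det]
  congr 1
  ext i j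
  by_cases h : i = j <;> simp [h] <;> ring

section Brouwer

open Metric MeasureTheory Set
open scoped NNReal

variable {E : Type*} [NormedAddCommGroup E]

theorem ContinuousLinearMap.det_one_add_pos_of_norm_lt_one [NormedSpace ℝ E]
    [FiniteDimensional ℝ E] {A : E →L[ℝ] E} (hA : ‖A‖ < 1) : 0 < (1 + A).det := by
  obtain ⟨q, -, hq⟩ := (A : E →ₗ[ℝ] E).exists_polynomial_eval_eq_det_one_add_smul
  have hne : ∀ s ∈ Icc (0 : ℝ) 1, q.eval s ≠ 0 := by
    intro s hs h0
    rw [hq] at h0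
    obtain ⟨x, hx, hx0⟩ := Submodule.exists_mem_ne_zero_of_ne_bot
      (LinearMap.bot_lt_ker_of_det_eq_zero h0).ne'
    have hx' : x = -(s • A x) := by
      have : x + s • A x = 0 := by simpa using hx
      exact eq_neg_of_add_eq_zero_left this
    have : ‖x‖ < ‖x‖ := calc
      ‖x‖ = s * ‖A x‖ := by
        conv_lhs => rw [hx', norm_neg, norm_smul, Real.norm_of_nonneg hs.1]
      _ ≤ 1 * (‖A‖ * ‖x‖) := by gcongr; exacts [hs.2, A.le_opNorm x]
      _ < ‖x‖ := by rw [one_mul]; exact mul_lt_of_lt_one_left (norm_pos_iff.2 hx0) hA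
    exact this.false
  have h0 : q.eval 0 = 1 := by rw [hq]; simp
  have h1 : q.eval 1 = (1 + A).det := by rw [hq, one_smul]; rfl
  rw [← h1]
  by_contra! hle
  obtain ⟨s, hs, hs0⟩ := intermediate_value_Icc' zero_le_one q.continuous.continuousOn
    (show (0 : ℝ) ∈ Icc (q.eval 1) (q.eval 0) from ⟨hle, h0 ▸ zero_le_one⟩)
  exact hne s hs hs0

theorem LipschitzWith.bijective_id_add [CompleteSpace E] {g : E → E} {K : ℝ≥0}
    (hg : LipschitzWith K g) (hK : K < 1) : Function.Bijective fun x ↦ x + g x := by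
  constructor
  · intro x y hxy
    by_contra hne
    have hd : dist x y = dist (g x) (g y) := by
      have : x - y = g y - g x := sub_eq_sub_iff_add_eq_add.2 (by simpa [add_comm] using hxy)
      rw [dist_comm (g x), dist_eq_norm, this, ← dist_eq_norm]
    have := hg.dist_le_mul x y
    have hpos := dist_pos.2 hne
    have hK' : (K : ℝ) < 1 := by exact_mod_cast hK
    nlinarith
  · intro y
    have hc : ContractingWith K fun z ↦ y - g z :=
      ⟨hK, LipschitzWith.of_dist_le_mul fun a b ↦ by
        simpa only [dist_sub_left] using hg.dist_le_mul a b⟩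
    refine ⟨hc.fixedPoint, ?_⟩
    have := hc.fixedPoint_isFixedPt
    exact eq_sub_iff_add_eq.1 this.symm

/-- A self-bijection which is the identity off `s` preserves `s`. -/
theorem Function.Bijective.image_eq_of_eqOn_compl {α : Type*} {f : α → α}
    (hf : Function.Bijective f) {s : Set α} (h : ∀ x ∉ s, f x = x) : f '' s = s := by
  ext y
  constructor
  · rintro ⟨x, hx, rfl⟩
    by_contra hy
    exact hy ((hf.1 (h _ hy)).symm ▸ hx)
  · intro hy
    obtain ⟨x, rfl⟩ := hf.2 y
    by_cases hx : x ∈ s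
    · exact ⟨x, hx, rfl⟩
    · exact absurd (h x hx ▸ hy) hx

/-- The quotient `φ / m` is Lipschitz if `φ` and `m` are, `m` is bounded below and `‖φ‖ ≤ m`. -/
theorem LipschitzWith.exists_inv_smul_of_norm_le [NormedSpace ℝ E] {X : Type*}
    [PseudoMetricSpace X] {φ : X → E} {m : X → ℝ} {K L : ℝ≥0} {δ : ℝ} (hφ : LipschitzWith K φ)
    (hm : LipschitzWith L m) (hδ : 0 < δ) (hδm : ∀ x, δ ≤ m x) (hφm : ∀ x, ‖φ x‖ ≤ m x) :
    ∃ C, LipschitzWith C fun x ↦ (m x)⁻¹ • φ x := by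
  refine ⟨_, LipschitzWith.of_dist_le' (K := δ⁻¹ * (K + L)) fun x y ↦ ?_⟩
  have hx : 0 < m x := hδ.trans_le (hδm x)
  have hy : 0 < m y := hδ.trans_le (hδm y)
  have hsplit : (m x)⁻¹ • φ x - (m y)⁻¹ • φ y =
      (m x)⁻¹ • ((φ x - φ y) + (m y - m x) • (m y)⁻¹ • φ y) := by
    match_scalars <;> field_simp
    ring
  have hunit : ‖(m y)⁻¹ • φ y‖ ≤ 1 := by
    rw [norm_smul, norm_inv, Real.norm_of_nonneg hy.le, inv_mul_le_iff₀ hy, mul_one]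
    exact hφm y
  rw [dist_eq_norm, hsplit, norm_smul, norm_inv, Real.norm_of_nonneg hx.le, mul_assoc]
  gcongr
  · exact hδm x
  calc ‖φ x - φ y + (m y - m x) • (m y)⁻¹ • φ y‖
      ≤ ‖φ x - φ y‖ + ‖m y - m x‖ * ‖(m y)⁻¹ • φ y‖ :=
        (norm_add_le _ _).trans_eq (by rw [norm_smul])
    _ ≤ K * dist x y + L * dist x y * 1 := by
        gcongr
        · exact (dist_eq_norm _ _).symm.trans_le (hφ.dist_le_mul x y)
        · rw [← dist_eq_norm, dist_comm]
          exact hm.dist_le_mul x y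
    _ = (K + L) * dist x y := by ring

variable [NormedSpace ℝ E] [FiniteDimensional ℝ E]

theorem integral_det_one_add_fderiv_eq_volume [MeasurableSpace E] [BorelSpace E] (μ : Measure E)
    [μ.IsAddHaarMeasure] {g : E → E} {K : ℝ≥0} {s : Set E} (hg : LipschitzWith K g) (hK : K < 1)
    (hs : IsOpen s) (hμs : μ s ≠ ⊤) (hd : ∀ x ∈ s, DifferentiableAt ℝ g x)
    (h0 : ∀ x ∉ s, g x = 0) :
    IntegrableOn (fun x ↦ (1 + fderiv ℝ g x).det) s μ ∧
      ∫ x in s, (1 + fderiv ℝ g x).det ∂μ = μ.real s := by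
  have hbij := hg.bijective_id_add hK
  have himg : (fun x ↦ x + g x) '' s = s :=
    hbij.image_eq_of_eqOn_compl fun x hx ↦ by simp [h0 x hx]
  have hder : ∀ x ∈ s, HasFDerivWithinAt (fun x ↦ x + g x) (1 + fderiv ℝ g x) s x := fun x hx ↦
    ((hasFDerivAt_id x).add (hd x hx).hasFDerivAt).hasFDerivWithinAt
  have habs : ∀ x, |(1 + fderiv ℝ g x).det| • (1 : ℝ) = (1 + fderiv ℝ g x).det := fun x ↦ by
    rw [smul_eq_mul, mul_one, abs_of_pos]
    exact ContinuousLinearMap.det_one_add_pos_of_norm_lt_one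
      ((norm_fderiv_le_of_lipschitz ℝ hg).trans_lt (by exact_mod_cast hK))
  have hint := integrableOn_image_iff_integrableOn_abs_det_fderiv_smul μ hs.measurableSet hder
    hbij.1.injOn fun _ ↦ (1 : ℝ)
  have heq := integral_image_eq_integral_abs_det_fderiv_smul μ hs.measurableSet hder
    hbij.1.injOn fun _ ↦ (1 : ℝ)
  simp only [habs, himg] at hint heq
  exact ⟨hint.1 (integrableOn_const hμs), by rw [← heq]; simp⟩

/-- A Lipschitz map which is the identity off a bounded open set `s` and differentiable on `s`
has nonzero Jacobian somewhere on `s`. -/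
theorem exists_det_one_add_fderiv_ne_zero {g : E → E} {K : ℝ≥0} {s : Set E}
    (hg : LipschitzWith K g) (hs : IsOpen s) (hne : s.Nonempty) (hb : Bornology.IsBounded s)
    (hd : ∀ x ∈ s, DifferentiableAt ℝ g x) (h0 : ∀ x ∉ s, g x = 0) :
    ∃ x ∈ s, (1 + fderiv ℝ g x).det ≠ 0 := by
  borelize E
  let μ : Measure E := Measure.addHaar
  by_contra! hzero
  obtain ⟨w, t, ht, hw⟩ := exists_eval_one_eq_sum_eval_small (Module.finrank ℝ E)
    (show (0 : ℝ) < ((K : ℝ) + 1)⁻¹ by positivity)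
  have hμs : μ s ≠ ⊤ := hb.measure_lt_top.ne
  have hvol : ∀ i, IntegrableOn (fun x ↦ (1 + t i • fderiv ℝ g x).det) s μ ∧
      ∫ x in s, (1 + t i • fderiv ℝ g x).det ∂μ = μ.real s := by
    intro i
    have hlip : LipschitzWith (‖t i‖₊ * K) (t i • g) := (lipschitzWith_smul (t i)).comp hg
    have hlt : ‖t i‖₊ * K < 1 := by
      rw [← NNReal.coe_lt_coe]
      simp only [NNReal.coe_mul, coe_nnnorm, Real.norm_of_nonneg (ht i).1.le, NNReal.coe_one]
      have h1 := (lt_inv_comm₀ (ht i).1 (by positivity)).1 (ht i).2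
      have h2 := mul_lt_mul_of_pos_left h1 (ht i).1
      rw [mul_inv_cancel₀ (ht i).1.ne'] at h2
      nlinarith [(ht i).1]
    have := integral_det_one_add_fderiv_eq_volume μ hlip hlt hs hμs
      (fun x hx ↦ (hd x hx).const_smul _) (fun x hx ↦ by simp [h0 x hx])
    simpa only [fderiv_const_smul_field, Pi.smul_apply] using this
  have hpt : ∀ A : E →L[ℝ] E, (1 + A).det =
      ∑ i ∈ Finset.range (Module.finrank ℝ E + 1), w i * (1 + t i • A).det := by
    intro A
    obtain ⟨q, hqd, hq⟩ := (A : E →ₗ[ℝ] E).exists_polynomial_eval_eq_det_one_add_smul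
    have := hw q hqd
    simp only [hq, one_smul] at this
    exact this
  have hsum : ∑ i ∈ Finset.range (Module.finrank ℝ E + 1), w i = 1 := by
    simpa using (hw 1 (by simp)).symm
  have hI : ∫ x in s, (1 + fderiv ℝ g x).det ∂μ = μ.real s := by
    rw [funext fun x ↦ hpt (fderiv ℝ g x), integral_finsetSum _ fun i _ ↦ (hvol i).1.const_mul _]
    simp_rw [integral_const_mul, (hvol _).2, ← Finset.sum_mul, hsum, one_mul]
  rw [setIntegral_congr_fun hs.measurableSet hzero, integral_zero] at hI
  exact (ENNReal.toReal_pos (hs.measure_pos μ hne).ne' hμs).ne hI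

end Brouwer

section LeraySchauder

open Metric Set Filter Topology
open scoped NNReal

variable {E : Type*} [NormedAddCommGroup E] [InnerProductSpace ℝ E] [FiniteDimensional ℝ E]

/-- If a map has constant positive norm near a point, its derivative there is singular. -/
theorem HasFDerivAt.det_eq_zero_of_norm_eventually_eq {h : E → E} {h' : E →L[ℝ] E} {x : E} {R : ℝ}
    (hh : HasFDerivAt h h' x) (hR : 0 < R) (hnorm : ∀ᶠ y in 𝓝 x, ‖h y‖ = R) : h'.det = 0 := by
  by_contra hdet
  obtain ⟨u, hu⟩ : ∃ u, h' u = h x :=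
    (LinearMap.equivOfDetNeZero (h' : E →ₗ[ℝ] E) hdet).surjective (h x)
  have hconst : (fun y ↦ ‖h y‖ ^ 2) =ᶠ[𝓝 x] fun _ ↦ R ^ 2 := by
    filter_upwards [hnorm] with y hy using by rw [hy]
  have hzero := (hh.norm_sq.congr_of_eventuallyEq hconst.symm).unique (hasFDerivAt_const _ x)
  have := DFunLike.congr_fun hzero u
  simp [hu, hnorm.self_of_nhds, hR.ne'] at this

/-- A differentiable Lipschitz map which is the identity off a ball is not bounded away from `0`. -/
theorem LipschitzWith.exists_norm_lt_of_eq_id_off_ball {F : E → E} {K : ℝ≥0} {R δ : ℝ}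
    (hL : LipschitzWith K F) (hF : Differentiable ℝ F) (hR : 0 < R)
    (hid : ∀ x, R ≤ ‖x‖ → F x = x) (hδ : 0 < δ) : ∃ x, ‖F x‖ < δ := by
  by_contra! hδF
  have hpos : ∀ x, 0 < ‖F x‖ := fun x ↦ hδ.trans_le (hδF x)
  obtain ⟨C₁, hC₁⟩ := hL.exists_inv_smul_of_norm_le (lipschitzWith_one_norm.comp hL) hδ hδF
    fun x ↦ le_rfl
  obtain ⟨C₂, hC₂⟩ := (LipschitzWith.id (α := E)).exists_inv_smul_of_norm_le
    (lipschitzWith_one_norm.const_max R) hR (fun x ↦ le_max_left _ _) fun x ↦ le_max_right _ _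
  set r : E → E := fun x ↦ R • ‖F x‖⁻¹ • F x with hr
  set π : E → E := fun x ↦ R • (max R ‖x‖)⁻¹ • x with hπ
  have hrL : LipschitzWith (‖R‖₊ * C₁) r := (lipschitzWith_smul R).comp hC₁
  have hπL : LipschitzWith (‖R‖₊ * C₂) π := (lipschitzWith_smul R).comp hC₂
  have hπid : ∀ x ∈ ball (0 : E) R, π =ᶠ[𝓝 x] id := fun x hx ↦ by
    filter_upwards [isOpen_ball.mem_nhds hx] with y hy
    rw [mem_ball_zero_iff] at hy
    simp [hπ, max_eq_left hy.le, smul_smul, hR.ne']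
  have hrd : Differentiable ℝ r := fun x ↦
    (((hF x).norm ℝ (norm_pos_iff.1 (hpos x))).inv (hpos x).ne').smul (hF x) |>.const_smul R
  obtain ⟨x, hx, hdet⟩ := exists_det_one_add_fderiv_ne_zero (hrL.sub hπL) isOpen_ball
    ⟨0, mem_ball_self hR⟩ isBounded_ball
    (fun x hx ↦ (hrd x).sub (differentiableAt_id.congr_of_eventuallyEq (hπid x hx)))
    (fun x hx ↦ by
      rw [mem_ball_zero_iff, not_lt] at hx
      simp [hr, hπ, hid x hx, max_eq_right hx])
  refine hdet (HasFDerivAt.det_eq_zero_of_norm_eventually_eq (h := r) (x := x) ?_ hR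
    (Eventually.of_forall fun y ↦ ?_))
  · have hder : HasFDerivAt (r - π) (fderiv ℝ r x - 1) x :=
      (hrd x).hasFDerivAt.sub ((hasFDerivAt_id x).congr_of_eventuallyEq (hπid x hx))
    rw [show (fun x ↦ r x - π x) = r - π from rfl, hder.fderiv, add_sub_cancel]
    exact (hrd x).hasFDerivAt
  · simp [hr, norm_smul, (hpos y).ne', abs_of_pos hR]

/-- **Leray–Schauder alternative** in finite dimension: if the solutions of `x = c • G x` with
`c ∈ [0, 1]` are bounded, then the continuous map `G` has a fixed point. -/
theorem Continuous.exists_fixedPoint_of_bounded_solutions {G : E → E} (hG : Continuous G) (R : ℝ)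
    (hb : ∀ x, ∀ c ∈ Icc (0 : ℝ) 1, x = c • G x → ‖x‖ ≤ R) : ∃ x, G x = x := by
  by_contra! hfix
  have hR : 0 ≤ R := (norm_nonneg _).trans (hb 0 0 (by simp) (by simp))
  set c : E → ℝ := fun x ↦ max 0 (min 1 (R + 1 - ‖x‖)) with hc
  set k : E → E := fun x ↦ c x • G x with hk
  have hc01 : ∀ x, c x ∈ Icc (0 : ℝ) 1 := fun x ↦ ⟨le_max_left _ _, by simp [hc]⟩
  have hkcont : Continuous k := by fun_prop
  have hk0 : ∀ x, R + 1 ≤ ‖x‖ → k x = 0 := fun x hx ↦ by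
    have : c x = 0 := max_eq_left ((min_le_right _ _).trans (by linarith))
    simp [hk, this]
  have hne : ∀ x, 0 < ‖x - k x‖ := fun x ↦ by
    rw [norm_pos_iff, sub_ne_zero]
    intro hx
    have hle := hb x (c x) (hc01 x) hx
    have : c x = 1 := by
      simp only [hc]
      rw [min_eq_left (by linarith), max_eq_right zero_le_one]
    exact hfix x (by simpa [hk, this] using hx.symm)
  obtain ⟨δ, hδ, hδk⟩ := (isCompact_closedBall (0 : E) (R + 2)).exists_forall_le'
    (by fun_prop : ContinuousOn (fun x ↦ ‖x - k x‖) _) fun x _ ↦ hne x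
  have hkc : HasCompactSupport k := HasCompactSupport.intro (isCompact_closedBall 0 (R + 1))
    fun x hx ↦ hk0 x (by rw [mem_closedBall_zero_iff, not_le] at hx; exact hx.le)
  obtain ⟨η, hη, hkη⟩ := Metric.uniformContinuous_iff.1
    (hkc.uniformContinuous_of_continuous hkcont) (δ / 2) (half_pos hδ)
  obtain ⟨g, hgs, hg⟩ := hkcont.exists_contDiff_dist_le_of_forall_mem_ball_dist_le
    (lt_min hη one_pos)
  have hgk : ∀ x, ‖g x - k x‖ ≤ δ / 2 := fun x ↦ by
    rw [← dist_eq_norm]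
    exact hg x _ fun y hy ↦ (hkη ((mem_ball.1 hy).trans_le (min_le_left _ _))).le
  have hg0 : ∀ x, R + 2 ≤ ‖x‖ → g x = 0 := fun x hx ↦ by
    have hkx := hk0 x (by linarith)
    have := hg x 0 fun y hy ↦ by
      have h1 := (mem_ball.1 hy).trans_le (min_le_right _ _)
      rw [dist_comm, dist_eq_norm] at h1
      rw [hkx, hk0 y (by linarith [norm_sub_norm_le x y]), dist_self]
    rwa [dist_le_zero, hkx] at this
  have hgc : HasCompactSupport g := HasCompactSupport.intro (isCompact_closedBall 0 (R + 2))
    fun x hx ↦ hg0 x (by rw [mem_closedBall_zero_iff, not_le] at hx; exact hx.le)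
  obtain ⟨C, hC⟩ := hgs.lipschitzWith_of_hasCompactSupport hgc (by simp)
  obtain ⟨x, hx⟩ := (LipschitzWith.id.sub hC).exists_norm_lt_of_eq_id_off_ball
    (R := R + 2) (differentiable_id.sub (hgs.differentiable (by simp))) (by linarith)
    (fun x hx ↦ by simp [hg0 x hx]) (lt_min (half_pos hδ) (show (0 : ℝ) < R + 2 by linarith))
  rw [lt_min_iff] at hx
  rcases le_total ‖x‖ (R + 2) with hxR | hxR
  · have h1 := hδk x (mem_closedBall_zero_iff.2 hxR)
    have h2 := norm_add_le (id x - g x) (g x - k x)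
    rw [sub_add_sub_cancel] at h2
    have h3 := hgk x
    simp only [id] at h2 hx
    linarith [hx.1]
  · have := hx.2
    simp only [hg0 x hxR, id, sub_zero] at this
    linarith

end LeraySchauder

/-- If `G x = M_x x + v_x` is continuous with `‖M_x‖_∞ ≤ c* < 1` and
`‖v_x‖_∞ ≤ B` uniformly, then `G` has a fixed point. -/
theorem stmt2 {p : ℕ} (G : (Fin p → ℝ) → Fin p → ℝ) (hG : Continuous G)
    (M : (Fin p → ℝ) → Matrix (Fin p) (Fin p) ℝ) (v : (Fin p → ℝ) → Fin p → ℝ)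
    (cstar B : ℝ) (hc : cstar < 1)
    (hGeq : ∀ x, G x = M x *ᵥ x + v x)
    (hM : ∀ x, ‖M x‖ ≤ cstar) (hv : ∀ x, ‖v x‖ ≤ B) :
    ∃ x : Fin p → ℝ, G x = x := by
  have hapriori : ∀ x, ∀ c ∈ Set.Icc (0 : ℝ) 1, x = c • G x → ‖x‖ ≤ B / (1 - cstar) := by
    intro x c hc01 hx
    rw [le_div_iff₀ (by linarith)]
    have : ‖x‖ ≤ cstar * ‖x‖ + B := calc
      ‖x‖ = c * ‖G x‖ := by conv_lhs => rw [hx, norm_smul, Real.norm_of_nonneg hc01.1]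
      _ ≤ ‖G x‖ := mul_le_of_le_one_left (norm_nonneg _) hc01.2
      _ ≤ ‖M x *ᵥ x‖ + ‖v x‖ := by rw [hGeq]; exact norm_add_le _ _
      _ ≤ cstar * ‖x‖ + B := by
        gcongr
        · exact (Matrix.linfty_opNorm_mulVec _ _).trans (by gcongr; exact hM x)
        · exact hv x
    linarith
  obtain ⟨R, hR⟩ := ((isCompact_closedBall (0 : Fin p → ℝ) (B / (1 - cstar))).image
    (PiLp.continuous_toLp 2 _)).isBounded.exists_norm_le
  have hcont : Continuous fun x : EuclideanSpace ℝ (Fin p) ↦ WithLp.toLp 2 (G x.ofLp) :=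
    (PiLp.continuous_toLp 2 _).comp (hG.comp (PiLp.continuous_ofLp 2 _))
  obtain ⟨x, hx⟩ := hcont.exists_fixedPoint_of_bounded_solutions R fun x c hc01 hx ↦
    hR x ⟨x.ofLp, mem_closedBall_zero_iff.2
      (hapriori _ c hc01 (by simpa using congrArg WithLp.ofLp hx)), rfl⟩
  exact ⟨x.ofLp, by simpa using congrArg WithLp.ofLp hx⟩
end
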